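/- Let (X,f) be a TDS, φ: X → ℝ continuous, and μ ∈ M(X,f) any invariant measure with h_μ(f) < ∞. Then SP̄_μ(f,φ) := lim_{ε→0} inf_{F∋μ} limsup_{n→∞} (1/n) log P(F;φ,n,ε) ≤ h_μ(f) + ∫_X φ dμ. -/

import Mathlib

open MeasureTheory Filter Set
open scoped ENNReal NNReal

namespace Paper

variable {X : Type*}

/-- Birkhoff sum `S_n φ(x) = ∑_{i<n} φ(f^i x)`. -/
def birk (f : X → X) (φ : X → ℝ) (n : ℕ) (x : X) : ℝ :=
  ∑ i ∈ Finset.range n, φ (f^[i] x)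

section Metric

variable [MetricSpace X]

/-- The Bowen ball `B_n(x, ε) = {y : d_n(x,y) < ε}`. -/
def bowenBall (f : X → X) (x : X) (n : ℕ) (ε : ℝ) : Set X :=
  {y | ∀ i < n, dist (f^[i] x) (f^[i] y) < ε}

/-- The number of indices `0 ≤ j ≤ n-1` with `dist (f^j x, f^j y) > ε`. -/
noncomputable def sepCount (f : X → X) (ε : ℝ) (n : ℕ) (x y : X) : ℕ :=
  Nat.card {j : ℕ // j < n ∧ ε < dist (f^[j] x) (f^[j] y)}

/-- `A` is an `(n,ε)`-separated set. -/
def IsNSep (f : X → X) (n : ℕ) (ε : ℝ) (A : Set X) : Prop :=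
  ∀ x ∈ A, ∀ y ∈ A, x ≠ y → ∃ j < n, ε < dist (f^[j] x) (f^[j] y)

/-- `A` is a `(δ,n,ε)`-separated set. -/
def IsDeltaSep (f : X → X) (δ : ℝ) (n : ℕ) (ε : ℝ) (A : Set X) : Prop :=
  ∀ x ∈ A, ∀ y ∈ A, x ≠ y → δ * n ≤ (sepCount f ε n x y : ℝ)

end Metric

section Entropy

variable [MeasurableSpace X]

/-- A finite measurable partition of `X`. -/
def IsFinPartition (s : Finset (Set X)) : Prop :=
  (∀ A ∈ s, MeasurableSet A) ∧ ⋃₀ (s : Set (Set X)) = Set.univ ∧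
    (s : Set (Set X)).Pairwise Disjoint

/-- The entropy `H(μ, ⋁_{i<n} f^{-i} ξ)` of the `n`-th dynamical refinement of the
partition `s` (with the convention `0 · log 0 = 0`). -/
noncomputable def dynH (f : X → X) (μ : Measure X) (s : Finset (Set X)) (n : ℕ) : ℝ :=
  -∑ w : Fin n → {A // A ∈ s},
      (μ (⋂ i : Fin n, f^[(i : ℕ)] ⁻¹' ((w i : Set X)))).toReal *
        Real.log (μ (⋂ i : Fin n, f^[(i : ℕ)] ⁻¹' ((w i : Set X)))).toReal

/-- The Kolmogorov–Sinai entropy `h_μ(f)`, as an extended real: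
`sup_ξ lim_n H(μ, ξ^n)/n`. -/
noncomputable def ksEntropy (f : X → X) (μ : Measure X) : EReal :=
  ⨆ (s : Finset (Set X)) (_ : IsFinPartition s),
    Filter.atTop.liminf (fun n : ℕ => ((dynH f μ s n / n : ℝ) : EReal))

end Entropy

section Empiric

variable [MeasurableSpace X]

/-- The empiric measure `E_n(x) = (1/n) ∑_{k<n} δ_{f^k x}`. -/
noncomputable def empiric (f : X → X) (x : X) (n : ℕ) : Measure X :=
  (n : ℝ≥0∞)⁻¹ • ∑ k ∈ Finset.range n, Measure.dirac (f^[k] x)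

end Empiric

section WeakStar

variable [MeasurableSpace X] [TopologicalSpace X] [OpensMeasurableSpace X]

/-- The set `X_{n,F}` of points whose `n`-th empiric measure lies in `F ⊆ M(X)`
(where `M(X)`, the space of Borel probability measures, carries the weak-star topology). -/
def Xnf (f : X → X) (n : ℕ) (F : Set (ProbabilityMeasure X)) : Set X :=
  {x | ∃ h : IsProbabilityMeasure (empiric f x n),
        (⟨empiric f x n, h⟩ : ProbabilityMeasure X) ∈ F}

end WeakStar

section SepPressure

variable [MetricSpace X] [MeasurableSpace X] [OpensMeasurableSpace X]

/-- `P(F;φ,n,ε)`: the supremum of `∑_{x∈E} e^{S_nφ(x)}` over `(n,ε)`-separated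
subsets `E ⊆ X_{n,F}`. -/
noncomputable def Psep (f : X → X) (φ : X → ℝ) (F : Set (ProbabilityMeasure X))
    (n : ℕ) (ε : ℝ) : ℝ≥0∞ :=
  ⨆ (E : Finset X) (_ : ↑E ⊆ Xnf f n F ∧ IsNSep f n ε ↑E),
    ∑ x ∈ E, ENNReal.ofReal (Real.exp (birk f φ n x))

/-- `P(F;φ,δ,n,ε)`: the analogue of `P(F;φ,n,ε)` with `(δ,n,ε)`-separated sets. -/
noncomputable def PsepDelta (f : X → X) (φ : X → ℝ) (F : Set (ProbabilityMeasure X))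
    (δ : ℝ) (n : ℕ) (ε : ℝ) : ℝ≥0∞ :=
  ⨆ (E : Finset X) (_ : ↑E ⊆ Xnf f n F ∧ IsDeltaSep f δ n ε ↑E),
    ∑ x ∈ E, ENNReal.ofReal (Real.exp (birk f φ n x))

/-- `SP̄_ν(f,φ) = lim_{ε→0} inf_{F∋ν} limsup_n (1/n) log P(F;φ,n,ε)`
(the limit in `ε` being a supremum by monotonicity). -/
noncomputable def SPbar (f : X → X) (φ : X → ℝ) (ν : ProbabilityMeasure X) : EReal :=
  ⨆ (ε : ℝ) (_ : 0 < ε), ⨅ (F : Set (ProbabilityMeasure X)) (_ : F ∈ nhds ν),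
    Filter.atTop.limsup (fun n : ℕ => (((n : ℝ)⁻¹ : ℝ) : EReal) * (Psep f φ F n ε).log)

/-- `S̲P_ν(f,φ) = lim_{ε→0} inf_{F∋ν} liminf_n (1/n) log P(F;φ,n,ε)`. -/
noncomputable def SPlow (f : X → X) (φ : X → ℝ) (ν : ProbabilityMeasure X) : EReal :=
  ⨆ (ε : ℝ) (_ : 0 < ε), ⨅ (F : Set (ProbabilityMeasure X)) (_ : F ∈ nhds ν),
    Filter.atTop.liminf (fun n : ℕ => (((n : ℝ)⁻¹ : ℝ) : EReal) * (Psep f φ F n ε).log)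

/-- `SP̄'_ν(f,φ)`: as `SP̄_ν(f,φ)` but via `(δ,n,ε)`-separated sets, with the limit
`δ → 0` taken before `ε → 0` (both limits being suprema by monotonicity). -/
noncomputable def SPbar' (f : X → X) (φ : X → ℝ) (ν : ProbabilityMeasure X) : EReal :=
  ⨆ (ε : ℝ) (_ : 0 < ε), ⨆ (δ : ℝ) (_ : 0 < δ),
    ⨅ (F : Set (ProbabilityMeasure X)) (_ : F ∈ nhds ν),
      Filter.atTop.limsup (fun n : ℕ =>
        (((n : ℝ)⁻¹ : ℝ) : EReal) * (PsepDelta f φ F δ n ε).log)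

/-- `S̲P'_ν(f,φ)`. -/
noncomputable def SPlow' (f : X → X) (φ : X → ℝ) (ν : ProbabilityMeasure X) : EReal :=
  ⨆ (ε : ℝ) (_ : 0 < ε), ⨆ (δ : ℝ) (_ : 0 < δ),
    ⨅ (F : Set (ProbabilityMeasure X)) (_ : F ∈ nhds ν),
      Filter.atTop.liminf (fun n : ℕ =>
        (((n : ℝ)⁻¹ : ℝ) : EReal) * (PsepDelta f φ F δ n ε).log)

end SepPressure

end Paper

open Paper

theorem null_frontier_iInter {X ι : Type*} [TopologicalSpace X] [MeasurableSpace X]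
    (μ : Measure X) (t : Finset ι) (C : ι → Set X) (h : ∀ i ∈ t, μ (frontier (C i)) = 0) :
    μ (frontier (⋂ i ∈ t, C i)) = 0 := by
  classical
  induction t using Finset.induction_on with
  | empty => simp
  | insert a t ha ih =>
    rw [Finset.set_biInter_insert]
    have h1 := h a (Finset.mem_insert_self a t)
    have h2 := ih (fun i hi => h i (Finset.mem_insert_of_mem hi))
    refine measure_mono_null (frontier_inter_subset _ _) ?_
    rw [measure_union_null_iff]
    exact ⟨measure_mono_null inter_subset_left h1, measure_mono_null inter_subset_right h2⟩

theorem exists_small_partition {X : Type*} [MetricSpace X] [CompactSpace X] [MeasurableSpace X]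
    [BorelSpace X] (μ : Measure X) [IsProbabilityMeasure μ] (ε : ℝ) (hε : 0 < ε) :
    ∃ s : Finset (Set X), IsFinPartition s ∧ (∀ A ∈ s, μ (frontier A) = 0) ∧
      ∀ A ∈ s, ∀ x ∈ A, ∀ y ∈ A, dist x y ≤ ε := by
  classical
  have hr : ∀ x : X, ∃ r ∈ Ioo 0 (ε / 2), μ (frontier (Metric.ball x r)) = 0 := by
    intro x
    obtain ⟨r, hr, h⟩ := exists_null_frontier_thickening μ {x} (half_pos hε)
    exact ⟨r, hr, by simpa using h⟩
  choose r hr0 hr using hr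
  obtain ⟨t, -, ht⟩ := isCompact_univ.elim_nhds_subcover (fun x => Metric.ball x (r x))
    (fun x _ => Metric.ball_mem_nhds x (hr0 x).1)
  let C : Finset X → X → Set X := fun P y =>
    if y ∈ P then Metric.ball y (r y) else (Metric.ball y (r y))ᶜ
  let A : Finset X → Set X := fun P => ⋂ y ∈ t, C P y
  let pat : X → Finset X := fun x => t.filter (fun y => x ∈ Metric.ball y (r y))
  have hmem : ∀ x, x ∈ A (pat x) := by
    intro x
    simp only [A, C, pat, mem_iInter]
    intro y hy
    by_cases h : x ∈ Metric.ball y (r y)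
    · rw [if_pos (by simp only [Finset.mem_filter]; exact ⟨hy, h⟩)]; exact h
    · rw [if_neg (by simp only [Finset.mem_filter]; exact fun h' => h h'.2)]; exact h
  have hpat : ∀ P ∈ t.powerset, ∀ x ∈ A P, P = pat x := by
    intro P hP x hx
    rw [Finset.mem_powerset] at hP
    simp only [A, C, mem_iInter] at hx
    ext y
    simp only [pat, Finset.mem_filter]
    constructor
    · intro hy
      have := hx y (hP hy)
      rw [if_pos hy] at this
      exact ⟨hP hy, this⟩
    · rintro ⟨hy, h⟩
      by_contra hn
      have := hx y hy
      rw [if_neg hn] at this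
      exact this h
  have hpt : ∀ x, pat x ∈ t.powerset := fun x => Finset.mem_powerset.2 (Finset.filter_subset _ _)
  refine ⟨t.powerset.image A, ⟨?_, ?_, ?_⟩, ?_, ?_⟩
  · intro B hB
    obtain ⟨P, hP, rfl⟩ := Finset.mem_image.1 hB
    refine Finset.measurableSet_biInter _ fun y _ => ?_
    simp only [C]
    split_ifs
    · exact measurableSet_ball
    · exact measurableSet_ball.compl
  · refine eq_univ_of_forall fun x => ?_
    exact ⟨A (pat x), by simpa using ⟨pat x, Finset.mem_powerset.1 (hpt x), rfl⟩, hmem x⟩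
  · intro B hB B' hB' hne
    obtain ⟨P, hP, rfl⟩ := Finset.mem_image.1 (Finset.mem_coe.1 hB)
    obtain ⟨P', hP', rfl⟩ := Finset.mem_image.1 (Finset.mem_coe.1 hB')
    refine Set.disjoint_left.2 fun x hx hx' => hne ?_
    rw [hpat P hP x hx, hpat P' hP' x hx']
  · intro B hB
    obtain ⟨P, hP, rfl⟩ := Finset.mem_image.1 hB
    refine null_frontier_iInter μ t _ fun y _ => ?_
    simp only [C]
    split_ifs
    · exact hr y
    · rw [frontier_compl]; exact hr y
  · intro B hB x hx y hy
    obtain ⟨P, hP, rfl⟩ := Finset.mem_image.1 hB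
    have hxy : pat x = pat y := (hpat P hP x hx).symm.trans (hpat P hP y hy)
    have hx1 := ht (mem_univ x)
    simp only [mem_iUnion] at hx1
    obtain ⟨z, hz, hxz⟩ := hx1
    have hz' : z ∈ pat x := Finset.mem_filter.2 ⟨hz, hxz⟩
    rw [hxy] at hz'
    have hyz := (Finset.mem_filter.1 hz').2
    have := dist_triangle_right x y z
    rw [Metric.mem_ball] at hxz hyz
    have := (hr0 z).2
    linarith

/-- Combinatorial core. -/
theorem card_bound {X S : Type*} [Fintype S] (f : X → X) (c0 : X → S) (q : ℕ) (hq : 0 < q)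
    (p : (Fin q → S) → ℝ) (hp0 : ∀ w, 0 < p w) (hp1 : ∑ w, p w ≤ 1) (n : ℕ) (E : Finset X)
    (hE : ∀ x ∈ E, ∀ y ∈ E, (∀ i < n, c0 (f^[i] x) = c0 (f^[i] y)) → x = y) (K : ℝ)
    (hK : ∀ x ∈ E, ∑ i ∈ Finset.range n,
      -Real.log (p (fun k : Fin q => c0 (f^[(k : ℕ)] (f^[i] x)))) ≤ K) :
    (E.card : ℝ) ≤ q * (Fintype.card (Fin q → S) : ℝ) ^ 2 * Real.exp (K / q) := by
  classical
  let c : X → (Fin q → S) := fun x k => c0 (f^[(k : ℕ)] x)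
  let m := n / q
  have hp1' : ∀ w, p w ≤ 1 := fun w =>
    (Finset.single_le_sum (fun v _ => (hp0 v).le) (Finset.mem_univ w)).trans hp1
  have hg : ∀ w, 0 ≤ -Real.log (p w) := fun w => by
    have := Real.log_nonpos (hp0 w).le (hp1' w); linarith
  have hqm : q * m ≤ n := Nat.mul_div_le n q
  have hqm' : n < q * m + q := by
    have := Nat.lt_mul_div_succ n hq
    simpa [Nat.mul_add] using this
  -- step 1
  have step1 : ∀ r < q, ∑ x ∈ E, ∏ j : Fin m, p (c (f^[r + q * (j : ℕ)] x)) ≤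
      (Fintype.card (Fin q → S) : ℝ) ^ 2 := by
    intro r hr
    let G : X → (Fin q → S) × (Fin m → (Fin q → S)) × (Fin q → S) := fun x =>
      (c x, fun j => c (f^[r + q * (j : ℕ)] x), c (f^[q * m] x))
    have hinj : Set.InjOn G E := by
      intro x hx y hy hxy
      refine hE x hx y hy fun i hi => ?_
      simp only [G, Prod.mk.injEq] at hxy
      obtain ⟨h1, h2, h3⟩ := hxy
      by_cases hiq : i < q
      · exact congrFun h1 ⟨i, hiq⟩
      by_cases him : i < r + q * m
      · have hj : (i - r) / q < m := by
          rw [Nat.div_lt_iff_lt_mul hq, mul_comm]; omega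
        have := congrFun (congrFun h2 ⟨(i - r) / q, hj⟩) ⟨(i - r) % q, Nat.mod_lt _ hq⟩
        simp only [c, ← Function.iterate_add_apply] at this
        have e : (i - r) % q + (r + q * ((i - r) / q)) = i := by
          have := Nat.mod_add_div (i - r) q
          omega
        rwa [e] at this
      · have := congrFun h3 ⟨i - q * m, by omega⟩
        simp only [c, ← Function.iterate_add_apply] at this
        have e : i - q * m + q * m = i := by omega
        rwa [e] at this
    calc ∑ x ∈ E, ∏ j : Fin m, p (c (f^[r + q * (j : ℕ)] x))
        = ∑ z ∈ E.image G, ∏ j, p (z.2.1 j) := by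
          rw [Finset.sum_image hinj]
      _ ≤ ∑ z : (Fin q → S) × (Fin m → (Fin q → S)) × (Fin q → S), ∏ j, p (z.2.1 j) :=
          Finset.sum_le_sum_of_subset_of_nonneg (Finset.subset_univ _)
            (fun z _ _ => Finset.prod_nonneg fun j _ => (hp0 _).le)
      _ = (Fintype.card (Fin q → S) : ℝ) ^ 2 * (∑ w, p w) ^ m := by
          rw [Fintype.sum_pow]
          simp only [Fintype.sum_prod_type, Finset.sum_const, Finset.card_univ, nsmul_eq_mul,
            ← Finset.mul_sum]
          ring
      _ ≤ (Fintype.card (Fin q → S) : ℝ) ^ 2 * 1 := by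
          gcongr
          exact pow_le_one₀ (Finset.sum_nonneg fun w _ => (hp0 w).le) hp1
      _ = _ := mul_one _
  -- step 2
  have step2 : ∀ x ∈ E, Real.exp (-(K / q)) ≤
      ∑ r ∈ Finset.range q, ∏ j : Fin m, p (c (f^[r + q * (j : ℕ)] x)) := by
    intro x hx
    have hsum : ∑ r ∈ Finset.range q, ∑ j : Fin m, -Real.log (p (c (f^[r + q * (j : ℕ)] x))) ≤ K := by
      refine le_trans ?_ (hK x hx)
      calc ∑ r ∈ Finset.range q, ∑ j : Fin m, -Real.log (p (c (f^[r + q * (j : ℕ)] x)))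
          = ∑ i ∈ Finset.range (m * q), -Real.log (p (c (f^[i] x))) := by
            rw [Finset.sum_comm, Finset.sum_range, ← finProdFinEquiv.sum_comp,
              Fintype.sum_prod_type]
            refine Finset.sum_congr rfl fun j _ => ?_
            rw [Finset.sum_range]
            rfl
        _ ≤ ∑ i ∈ Finset.range n, -Real.log (p (c (f^[i] x))) := by
            refine Finset.sum_le_sum_of_subset_of_nonneg ?_ (fun i _ _ => hg _)
            refine Finset.range_subset_range.2 ?_
            rw [mul_comm]; exact hqm
    have hq' : (q : ℝ) ≠ 0 := by positivity
    obtain ⟨r, hr, h⟩ := Finset.exists_le_of_sum_le (s := Finset.range q)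
      (f := fun r => ∑ j : Fin m, -Real.log (p (c (f^[r + q * (j : ℕ)] x)))) (g := fun _ => K / q)
      (by simpa using hq.ne') (by
        rw [Finset.sum_const, Finset.card_range, nsmul_eq_mul, mul_div_cancel₀ _ hq']
        exact hsum)
    refine le_trans ?_ (Finset.single_le_sum
      (f := fun r => ∏ j : Fin m, p (c (f^[r + q * (j : ℕ)] x)))
      (fun r _ => Finset.prod_nonneg fun j _ => (hp0 _).le) hr)
    have e : ∏ j : Fin m, p (c (f^[r + q * (j : ℕ)] x)) =
        Real.exp (-∑ j : Fin m, -Real.log (p (c (f^[r + q * (j : ℕ)] x)))) := by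
      rw [Finset.sum_neg_distrib, neg_neg, Real.exp_sum]
      exact Finset.prod_congr rfl fun j _ => (Real.exp_log (hp0 _)).symm
    simp only [e]
    exact Real.exp_le_exp.2 (neg_le_neg h)
  have h3 : (E.card : ℝ) * Real.exp (-(K / q)) ≤ q * (Fintype.card (Fin q → S) : ℝ) ^ 2 := by
    calc (E.card : ℝ) * Real.exp (-(K / q)) = ∑ x ∈ E, Real.exp (-(K / q)) := by simp
      _ ≤ _ := Finset.sum_le_sum step2
      _ = _ := Finset.sum_comm
      _ ≤ ∑ r ∈ Finset.range q, (Fintype.card (Fin q → S) : ℝ) ^ 2 :=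
          Finset.sum_le_sum fun r hr => step1 r (Finset.mem_range.1 hr)
      _ = _ := by simp
  rw [Real.exp_neg] at h3
  rwa [← div_eq_mul_inv, div_le_iff₀ (Real.exp_pos _)] at h3

theorem exists_weights {W : Type*} [Fintype W] (a : W → ℝ) (ha : ∀ w, 0 ≤ a w) (ha1 : ∑ w, a w ≤ 1)
    (γ : ℝ) (hγ : 0 < γ) :
    ∃ p : W → ℝ, (∀ w, 0 < p w) ∧ ∑ w, p w ≤ 1 ∧ ∃ η > 0, ∀ b : W → ℝ,
      (∀ w, b w ≤ a w + η) → ∑ w, b w * -Real.log (p w) ≤ -∑ w, a w * Real.log (a w) + γ := by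
  classical
  let N : ℝ := Fintype.card W
  have hN : 0 ≤ N := Nat.cast_nonneg _
  let δ : ℝ := γ / (2 * (N + 1))
  have hδ : 0 < δ := by positivity
  have hNδ : N * δ ≤ γ / 2 := by
    have : N * δ = γ / 2 * (N / (N + 1)) := by simp only [δ]; field_simp
    rw [this]
    have : N / (N + 1) ≤ 1 := by rw [div_le_one (by positivity)]; linarith
    nlinarith
  have hZ : 0 < 1 + N * δ := by positivity
  let p : W → ℝ := fun w => (a w + δ) / (1 + N * δ)
  have hp0 : ∀ w, 0 < p w := fun w => div_pos (by linarith [ha w]) hZ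
  have hp1 : ∑ w, p w ≤ 1 := by
    simp only [p]
    rw [← Finset.sum_div, div_le_one hZ, Finset.sum_add_distrib, Finset.sum_const,
      Finset.card_univ, nsmul_eq_mul]
    linarith
  have hp1' : ∀ w, p w ≤ 1 := fun w =>
    (Finset.single_le_sum (fun v _ => (hp0 v).le) (Finset.mem_univ w)).trans hp1
  have hg : ∀ w, 0 ≤ -Real.log (p w) := fun w => by
    have := Real.log_nonpos (hp0 w).le (hp1' w); linarith
  let L : ℝ := ∑ w, -Real.log (p w)
  have hL : 0 ≤ L := Finset.sum_nonneg fun w _ => hg w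
  refine ⟨p, hp0, hp1, γ / (2 * (L + 1)), by positivity, fun b hb => ?_⟩
  have hηL : γ / (2 * (L + 1)) * L ≤ γ / 2 := by
    have : γ / (2 * (L + 1)) * L = γ / 2 * (L / (L + 1)) := by field_simp
    rw [this]
    have : L / (L + 1) ≤ 1 := by rw [div_le_one (by positivity)]; linarith
    nlinarith
  have hlogZ : Real.log (1 + N * δ) ≤ N * δ := by
    have := Real.log_le_sub_one_of_pos hZ; linarith
  have hlogZ0 : 0 ≤ Real.log (1 + N * δ) := Real.log_nonneg (by nlinarith)
  have key : ∀ w, a w * -Real.log (p w) ≤ a w * Real.log (1 + N * δ) - a w * Real.log (a w) := by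
    intro w
    rcases (ha w).eq_or_lt with h | h
    · simp [← h]
    · have h1 : Real.log (p w) = Real.log (a w + δ) - Real.log (1 + N * δ) :=
        Real.log_div (by linarith) hZ.ne'
      have h2 : Real.log (a w) ≤ Real.log (a w + δ) := Real.log_le_log h (by linarith)
      rw [h1]
      nlinarith
  calc ∑ w, b w * -Real.log (p w) ≤ ∑ w, (a w + γ / (2 * (L + 1))) * -Real.log (p w) :=
        Finset.sum_le_sum fun w _ => mul_le_mul_of_nonneg_right (hb w) (hg w)
    _ = ∑ w, a w * -Real.log (p w) + γ / (2 * (L + 1)) * L := by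
        simp only [add_mul, Finset.sum_add_distrib, L, Finset.mul_sum]
    _ ≤ ∑ w, (a w * Real.log (1 + N * δ) - a w * Real.log (a w)) + γ / 2 :=
        add_le_add (Finset.sum_le_sum fun w _ => key w) hηL
    _ = (∑ w, a w) * Real.log (1 + N * δ) - ∑ w, a w * Real.log (a w) + γ / 2 := by
        rw [Finset.sum_sub_distrib, Finset.sum_mul]
    _ ≤ _ := by nlinarith

theorem sum_eq_integral_empiric {X : Type*} [MeasurableSpace X] (f : X → X) (x : X) (n : ℕ)
    (g : X → ℝ) (hg : Measurable g) :
    ∑ i ∈ Finset.range n, g (f^[i] x) = n * ∫ y, g y ∂(empiric f x n) := by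
  rcases Nat.eq_zero_or_pos n with rfl | hn
  · simp
  have hint : ∀ i ∈ Finset.range n, Integrable g (Measure.dirac (f^[i] x)) := fun i _ =>
    integrable_dirac' hg.stronglyMeasurable (by simp)
  rw [empiric, integral_smul_measure, integral_finsetSum_measure hint]
  have : (n : ℝ) ≠ 0 := by positivity
  simp only [integral_dirac' _ _ hg.stronglyMeasurable, ENNReal.toReal_inv, ENNReal.toReal_natCast,
    smul_eq_mul]
  field_simp

theorem main_step {X : Type*} [MetricSpace X] [CompactSpace X] [MeasurableSpace X] [BorelSpace X]
    (f : X → X) (hf : Continuous f) (φ : X → ℝ) (hφ : Continuous φ)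
    (μ : Measure X) (hp : IsProbabilityMeasure μ) (hinv : MeasurePreserving f μ μ)
    (ε : ℝ) (s : Finset (Set X)) (hs : IsFinPartition s)
    (hfr : ∀ A ∈ s, μ (frontier A) = 0) (hd : ∀ A ∈ s, ∀ x ∈ A, ∀ y ∈ A, dist x y ≤ ε)
    (q : ℕ) (hq : 0 < q) (γ : ℝ) (hγ : 0 < γ) :
    ∃ F ∈ nhds (X := ProbabilityMeasure X) ⟨μ, hp⟩, ∃ C : ℝ, 0 < C ∧ ∀ n : ℕ,
      Psep f φ F n ε ≤
        ENNReal.ofReal (C * Real.exp (n * (dynH f μ s q / q + ∫ x, φ x ∂μ + 2 * γ))) := by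
  classical
  obtain ⟨hmeas, hcov, hdisj⟩ := hs
  have hc0 : ∀ x : X, ∃ A : {A // A ∈ s}, x ∈ (A : Set X) := by
    intro x
    have : x ∈ ⋃₀ (s : Set (Set X)) := by rw [hcov]; trivial
    obtain ⟨A, hA, hx⟩ := this
    exact ⟨⟨A, hA⟩, hx⟩
  choose c0 hc0 using hc0
  have huniq : ∀ (x : X) (A : {A // A ∈ s}), x ∈ (A : Set X) ↔ c0 x = A := by
    intro x A
    constructor
    · intro hx
      by_contra hne
      exact Set.disjoint_left.1 (hdisj (c0 x).2 A.2 (fun h => hne (Subtype.ext h))) (hc0 x) hx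
    · rintro rfl; exact hc0 x
  let W := Fin q → {A // A ∈ s}
  let c : X → W := fun x k => c0 (f^[(k : ℕ)] x)
  let cyl : W → Set X := fun w => ⋂ i : Fin q, f^[(i : ℕ)] ⁻¹' ((w i : Set X))
  have hcyl : ∀ w x, x ∈ cyl w ↔ c x = w := by
    intro w x
    simp only [cyl, mem_iInter, mem_preimage, huniq, c]
    exact funext_iff.symm
  have hcylm : ∀ w, MeasurableSet (cyl w) := fun w =>
    MeasurableSet.iInter fun i => (hf.iterate i).measurable (hmeas _ (w i).2)
  have hcylf : ∀ w, μ (frontier (cyl w)) = 0 := by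
    intro w
    have := null_frontier_iInter μ (Finset.univ : Finset (Fin q))
      (fun i => f^[(i : ℕ)] ⁻¹' ((w i : Set X))) (fun i _ => by
        refine measure_mono_null ((hf.iterate i).frontier_preimage_subset _) ?_
        rw [(hinv.iterate i).measure_preimage isClosed_frontier.measurableSet.nullMeasurableSet]
        exact hfr _ (w i).2)
    simpa [cyl] using this
  let a : W → ℝ := fun w => (μ (cyl w)).toReal
  have ha1 : ∑ w, a w ≤ 1 := by
    have h1 : ∑ w, μ (cyl w) ≤ 1 := by
      rw [← measure_biUnion_finset (fun w _ w' _ hne => Set.disjoint_left.2 fun x hx hx' =>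
        hne (((hcyl w x).1 hx).symm.trans ((hcyl w' x).1 hx'))) (fun w _ => hcylm w)]
      exact prob_le_one
    rw [← ENNReal.toReal_sum (fun w _ => measure_ne_top _ _)]
    exact ENNReal.toReal_le_of_le_ofReal zero_le_one (by simpa using h1)
  obtain ⟨p, hp0, hp1, η, hη, hb⟩ := exists_weights a (fun w => ENNReal.toReal_nonneg) ha1 γ hγ
  let I := ∫ x, φ x ∂μ
  let F : Set (ProbabilityMeasure X) :=
    {ν | (∀ w, ((ν : Measure X) (cyl w)).toReal < a w + η) ∧ ∫ x, φ x ∂(ν : Measure X) < I + γ}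
  have hF : F ∈ nhds (X := ProbabilityMeasure X) ⟨μ, hp⟩ := by
    refine Filter.Eventually.and (Filter.eventually_all.2 fun w => ?_) ?_
    · have h1 := ProbabilityMeasure.tendsto_measure_of_null_frontier_of_tendsto'
        (tendsto_id (x := nhds (X := ProbabilityMeasure X) ⟨μ, hp⟩)) (hcylf w)
      have h2 := (ENNReal.tendsto_toReal (measure_ne_top μ (cyl w))).comp h1
      exact h2.eventually (gt_mem_nhds (lt_add_of_pos_right _ hη))
    · have h1 := (ProbabilityMeasure.continuous_integral_boundedContinuousFunction
        (BoundedContinuousFunction.mkOfCompact ⟨φ, hφ⟩)).tendsto ⟨μ, hp⟩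
      exact h1.eventually (gt_mem_nhds (lt_add_of_pos_right _ hγ))
  let C0 : ℝ := q * (Fintype.card W : ℝ) ^ 2
  have hC0 : 0 ≤ C0 := by positivity
  refine ⟨F, hF, C0 + 1, by positivity, fun n => ?_⟩
  refine iSup₂_le fun E hE => ?_
  obtain ⟨hEF, hsep⟩ := hE
  have hn0 : (0 : ℝ) ≤ n := Nat.cast_nonneg n
  have hcard : (E.card : ℝ) ≤ C0 * Real.exp (n * (dynH f μ s q + γ) / q) := by
    refine card_bound f c0 q hq p hp0 hp1 n E ?_ _ ?_
    · intro x hx y hy hxy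
      by_contra hne
      obtain ⟨j, hj, hlt⟩ := hsep x hx y hy hne
      refine absurd hlt (not_lt.2 (hd _ (c0 (f^[j] x)).2 _ (hc0 _) _ ?_))
      rw [hxy j hj]; exact hc0 _
    · intro x hx
      obtain ⟨hpr, hν, -⟩ := hEF hx
      change ∀ w, ((empiric f x n) (cyl w)).toReal < a w + η at hν
      have h1 := hb (fun w => ((empiric f x n) (cyl w)).toReal) (fun w => (hν w).le)
      have h2 : ∀ w, ∑ i ∈ Finset.range n, (cyl w).indicator (1 : X → ℝ) (f^[i] x) =
          n * ((empiric f x n) (cyl w)).toReal := by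
        intro w
        rw [sum_eq_integral_empiric f x n _ (measurable_one.indicator (hcylm w)),
          integral_indicator_one (hcylm w)]
        rfl
      calc ∑ i ∈ Finset.range n, -Real.log (p (c (f^[i] x)))
          = ∑ i ∈ Finset.range n, ∑ w, (cyl w).indicator (1 : X → ℝ) (f^[i] x) * -Real.log (p w) := by
            refine Finset.sum_congr rfl fun i _ => ?_
            rw [Finset.sum_eq_single (c (f^[i] x))]
            · rw [Set.indicator_of_mem ((hcyl _ _).2 rfl)]; simp
            · intro w _ hw
              rw [Set.indicator_of_notMem (fun h => hw ((hcyl _ _).1 h).symm)]; simp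
            · simp
        _ = ∑ w, n * (((empiric f x n) (cyl w)).toReal * -Real.log (p w)) := by
            rw [Finset.sum_comm]
            refine Finset.sum_congr rfl fun w _ => ?_
            rw [← Finset.sum_mul, h2 w, mul_assoc]
        _ = n * ∑ w, ((empiric f x n) (cyl w)).toReal * -Real.log (p w) := by
            rw [Finset.mul_sum]
        _ ≤ n * (dynH f μ s q + γ) := mul_le_mul_of_nonneg_left h1 hn0
  have hbirk : ∀ x ∈ E, birk f φ n x ≤ n * (I + γ) := by
    intro x hx
    obtain ⟨hpr, -, hν⟩ := hEF hx
    change ∫ y, φ y ∂(empiric f x n) < I + γ at hν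
    rw [birk, sum_eq_integral_empiric f x n φ hφ.measurable]
    exact mul_le_mul_of_nonneg_left hν.le hn0
  rw [← ENNReal.ofReal_sum_of_nonneg (fun x _ => (Real.exp_pos _).le)]
  refine ENNReal.ofReal_le_ofReal ?_
  have hq1 : (1 : ℝ) ≤ q := by exact_mod_cast hq
  calc ∑ x ∈ E, Real.exp (birk f φ n x) ≤ ∑ x ∈ E, Real.exp (n * (I + γ)) :=
        Finset.sum_le_sum fun x hx => Real.exp_le_exp.2 (hbirk x hx)
    _ = E.card * Real.exp (n * (I + γ)) := by simp
    _ ≤ (C0 * Real.exp (n * (dynH f μ s q + γ) / q)) * Real.exp (n * (I + γ)) := by gcongr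
    _ = C0 * Real.exp (n * (dynH f μ s q + γ) / q + n * (I + γ)) := by
        rw [mul_assoc, ← Real.exp_add]
    _ ≤ (C0 + 1) * Real.exp (n * (dynH f μ s q / q + I + 2 * γ)) := by
        gcongr
        · linarith
        · have h1 : n * (dynH f μ s q + γ) / q = n * (dynH f μ s q / q) + n * (γ / q) := by ring
          have h2 : n * (γ / q) ≤ n * γ :=
            mul_le_mul_of_nonneg_left (div_le_self hγ.le hq1) hn0
          rw [h1]
          linarith

theorem limsup_bound (P : ℕ → ℝ≥0∞) (C b : ℝ) (hC : 0 < C)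
    (h : ∀ n : ℕ, P n ≤ ENNReal.ofReal (C * Real.exp (n * b))) :
    Filter.atTop.limsup (fun n : ℕ => (((n : ℝ)⁻¹ : ℝ) : EReal) * (P n).log) ≤ (b : EReal) := by
  have hle : ∀ᶠ n : ℕ in atTop, (((n : ℝ)⁻¹ : ℝ) : EReal) * (P n).log ≤
      ((Real.log C * (n : ℝ)⁻¹ + b : ℝ) : EReal) := by
    filter_upwards [eventually_gt_atTop 0] with n hn
    have hn' : (0 : ℝ) < n := by exact_mod_cast hn
    have h1 : (P n).log ≤ ((Real.log C + n * b : ℝ) : EReal) := by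
      refine (ENNReal.log_le_log (h n)).trans ?_
      rw [ENNReal.log_ofReal_of_pos (by positivity), Real.log_mul hC.ne' (Real.exp_pos _).ne',
        Real.log_exp]
    calc (((n : ℝ)⁻¹ : ℝ) : EReal) * (P n).log
        ≤ (((n : ℝ)⁻¹ : ℝ) : EReal) * ((Real.log C + n * b : ℝ) : EReal) :=
          mul_le_mul_of_nonneg_left h1 (by exact_mod_cast (inv_pos.2 hn').le)
      _ = _ := by
          rw [← EReal.coe_mul]
          congr 1
          field_simp
  have ht : Tendsto (fun n : ℕ => ((Real.log C * (n : ℝ)⁻¹ + b : ℝ) : EReal)) atTop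
      (nhds (b : EReal)) := by
    refine (continuous_coe_real_ereal.tendsto b).comp ?_
    have := (tendsto_inv_atTop_nhds_zero_nat (𝕜 := ℝ)).const_mul (Real.log C)
    simpa using this.add_const b
  exact (limsup_le_limsup hle).trans ht.limsup_eq.le

/-- Step 1 of Theorem 4.9: for any invariant measure `μ` with finite entropy,
`SP̄_μ(f,φ) ≤ h_μ(f) + ∫φ dμ`. -/
theorem SPbar_le_free_energy {X : Type*} [MetricSpace X] [CompactSpace X] [MeasurableSpace X] [BorelSpace X]
    (f : X → X) (hf : Continuous f) (φ : X → ℝ) (hφ : Continuous φ)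
    (μ : Measure X) (hp : IsProbabilityMeasure μ) (hinv : MeasurePreserving f μ μ)
    (hfin : ksEntropy f μ < ⊤) :
    SPbar f φ (⟨μ, hp⟩ : MeasureTheory.ProbabilityMeasure X) ≤
      ksEntropy f μ + ((∫ x, φ x ∂μ : ℝ) : EReal) := by
  refine iSup₂_le fun ε hε => ?_
  obtain ⟨s, hs, hfr, hd⟩ := exists_small_partition μ ε hε
  set A : EReal := ⨅ (F : Set (ProbabilityMeasure X)) (_ : F ∈ nhds (X := ProbabilityMeasure X) ⟨μ, hp⟩),
    Filter.atTop.limsup (fun n : ℕ => (((n : ℝ)⁻¹ : ℝ) : EReal) * (Psep f φ F n ε).log) with hA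
  have key : ∀ q : ℕ, 0 < q → A ≤ ((dynH f μ s q / q + ∫ x, φ x ∂μ : ℝ) : EReal) := by
    intro q hq
    refine EReal.le_of_forall_lt_iff_le.1 fun z hz => ?_
    rw [EReal.coe_lt_coe_iff] at hz
    obtain ⟨F, hF, C, hC, hb⟩ := main_step f hf φ hφ μ hp hinv ε s hs hfr hd q hq
      ((z - (dynH f μ s q / q + ∫ x, φ x ∂μ)) / 2) (by linarith)
    refine (iInf₂_le F hF).trans (limsup_bound _ C z hC fun n => ?_)
    have := hb n
    rwa [show dynH f μ s q / q + ∫ x, φ x ∂μ + 2 * ((z - (dynH f μ s q / q + ∫ x, φ x ∂μ)) / 2) = z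
      by ring] at this
  rw [← EReal.sub_le_iff_le_add (Or.inl (EReal.coe_ne_bot _)) (Or.inl (EReal.coe_ne_top _))]
  refine le_trans ?_ (le_iSup₂ (f := fun (s : Finset (Set X)) (_ : IsFinPartition s) =>
    Filter.atTop.liminf (fun n : ℕ => ((dynH f μ s n / n : ℝ) : EReal))) s hs)
  refine le_liminf_of_le (by isBoundedDefault) ?_
  filter_upwards [eventually_gt_atTop 0] with q hq
  refine EReal.sub_le_of_le_add ?_
  rw [← EReal.coe_add]
  exact key q hq
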